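/- Let n ≥ 404 be a natural number and set b := 2^{⌈log₂((1/3)·log n)⌉}, where log is the natural logarithm. Then u_b(n) ≥ 1/(16 log n) and u_{2b}(n) ≥ 1/(21 log n). -/

import Mathlib

open scoped Classical

/-- `ubProp b n σ` says: there is an integer `j` with `1 ≤ j ≤ 4√n/(3b)` such that exactly
`j·b` points of `{1,…,n}` lie in cycles of `σ` of length divisible by `b` but not by `2b`,
and the remaining points lie in cycles of length not divisible by `b`.  The cycle length of
the point `x` under `σ` is `Function.minimalPeriod σ x`. -/
def ubProp (b n : ℕ) (σ : Equiv.Perm (Fin n)) : Prop :=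
  ∃ j : ℕ, 1 ≤ j ∧ (j : ℝ) ≤ 4 * Real.sqrt n / (3 * (b : ℝ)) ∧
    (Finset.univ.filter (fun x : Fin n =>
        b ∣ Function.minimalPeriod σ x ∧ ¬ (2 * b ∣ Function.minimalPeriod σ x))).card = j * b ∧
    ∀ x : Fin n,
      ¬ (b ∣ Function.minimalPeriod σ x ∧ ¬ (2 * b ∣ Function.minimalPeriod σ x)) →
        ¬ (b ∣ Function.minimalPeriod σ x)

/-- `ub b n` is the proportion of permutations in `Sym_n` satisfying `ubProp b n`. -/
noncomputable def ub (b n : ℕ) : ℝ :=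
  ((Finset.univ.filter (fun σ : Equiv.Perm (Fin n) => ubProp b n σ)).card : ℝ) /
    (Nat.factorial n : ℝ)

/-!
If `σ` has a single cycle of length divisible by `b`, and that cycle has length exactly `b`, then
`σ` satisfies `ubProp b n` with `j = 1`. Summing over the support of this cycle shows that the
proportion of such permutations is `p (n - b) / b`, where `p m` is the proportion of permutations
in `Sym_m` without cycles of length divisible by `b`. Classifying by the cycle of a fixed point
gives `m * p m = ∑ p j` over `j < m` with `b ∤ m - j`, hence `p m = ∏_{i ≤ m/b} (1 - 1/(ib))`, and
Bernoulli's inequality bounds this below by `(1 - 1/b) * n ^ (-1/b) ≥ exp (-t) / 2` with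
`t = log n / b`. Both for `b` and for `2b` one has `3/4 ≤ t ≤ 3`; there `exp t ≤ 8 * t` by
convexity, so `u_b(n) ≥ exp (-t) / (2b) ≥ 1 / (16 log n)`.
-/

open Equiv Finset Function
open scoped Nat

section Cycles

variable {α β : Type*}

lemma minimalPeriod_eq_of_semiconj {f : α → α} {g : β → β} {v : α → β} (hv : Injective v)
    (h : Semiconj v f g) (x : α) : minimalPeriod g (v x) = minimalPeriod f x := by
  refine minimalPeriod_eq_minimalPeriod_iff.2 fun k => ?_
  rw [IsPeriodicPt, IsFixedPt, ← (h.iterate_right k).eq, hv.eq_iff, IsPeriodicPt, IsFixedPt]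

lemma isCycleOn_range_of_semiconj {v : α → β} {e : Perm α} {σ : Perm β} (h : Semiconj v e σ)
    (he : e.IsCycleOn Set.univ) : σ.IsCycleOn (Set.range v) := by
  refine ⟨⟨?_, σ.injective.injOn, ?_⟩, ?_⟩
  · rintro _ ⟨x, rfl⟩
    exact ⟨e x, h.eq x⟩
  · rintro _ ⟨x, rfl⟩
    exact ⟨v (e.symm x), ⟨_, rfl⟩, by rw [← h.eq, e.apply_symm_apply]⟩
  · rintro _ ⟨x, rfl⟩ _ ⟨y, rfl⟩
    obtain ⟨i, rfl⟩ := he.2 (Set.mem_univ x) (Set.mem_univ y)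
    have hinv : Semiconj v e.symm σ.symm := h.inverses_right e.right_inv σ.left_inv
    refine ⟨i, ?_⟩
    cases i with
    | ofNat k => exact ((h.iterate_right k).eq x).symm
    | negSucc k => exact ((hinv.iterate_right (k + 1)).eq x).symm

lemma minimalPeriod_eq_card_of_isCycleOn {σ : Perm α} {s : Finset α} (hσ : σ.IsCycleOn s) {a : α}
    (ha : a ∈ s) : minimalPeriod σ a = #s :=
  Nat.dvd_antisymm
    (IsPeriodicPt.minimalPeriod_dvd (hσ.pow_card_apply ha))
    ((hσ.pow_apply_eq ha).1 iterate_minimalPeriod)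

lemma eq_of_isCycleOn_of_mem {σ : Perm α} {s t : Set α} (hs : σ.IsCycleOn s) (ht : σ.IsCycleOn t)
    {a : α} (has : a ∈ s) (hat : a ∈ t) : s = t :=
  (hs.range_zpow has).symm.trans (ht.range_zpow hat)

lemma isCycleOn_univ_iff_cycleType_eq [Fintype α] [DecidableEq α] [Nontrivial α] (σ : Perm α) :
    σ.IsCycleOn Set.univ ↔ σ.cycleType = {Fintype.card α} := by
  constructor
  · intro hσ
    have hsupp : σ.support = univ := by
      ext x
      simpa using hσ.apply_ne Set.nontrivial_univ (Set.mem_univ x)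
    have hcycle : σ.IsCycle :=
      Perm.isCycle_iff_exists_isCycleOn.2 ⟨_, Set.nontrivial_univ, hσ, fun _ _ => Set.mem_univ _⟩
    rw [hcycle.cycleType, hsupp, card_univ]
  · intro hσ
    have hcycle : σ.IsCycle := by
      rw [← Perm.card_cycleType_eq_one, hσ, Multiset.card_singleton]
    have hsupp : σ.support = univ := by
      rw [← card_eq_iff_eq_univ, ← Perm.sum_cycleType, hσ, Multiset.sum_singleton]
    have hmoved : {x | σ x ≠ x} = Set.univ := by
      ext x
      simp [← Perm.mem_support, hsupp]
    exact hmoved ▸ hcycle.isCycleOn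

lemma card_isCycleOn_univ (α : Type*) [Fintype α] [DecidableEq α] [Nonempty α] :
    #{σ : Perm α | σ.IsCycleOn Set.univ} = (Fintype.card α - 1)! := by
  rcases subsingleton_or_nontrivial α with hα | hα
  · have hcard : Fintype.card α = 1 :=
      le_antisymm (Fintype.card_le_one_iff_subsingleton.2 hα) Fintype.card_pos
    rw [filter_true_of_mem fun σ _ => Perm.isCycleOn_of_subsingleton σ Set.univ, card_univ,
      Fintype.card_perm, hcard]
    rfl
  · simp_rw [isCycleOn_univ_iff_cycleType_eq]
    rw [Perm.card_of_cycleType_singleton Fintype.one_lt_card le_rfl, Nat.choose_self, mul_one]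

end Cycles

lemma sum_powerset_factorial_mul_factorial {α R : Type*} [CommSemiring R] (s : Finset α)
    (f : ℕ → R) :
    ∑ t ∈ s.powerset, ((#s - #t)! * (#t)! : R) * f #t = (#s)! * ∑ k ∈ range (#s + 1), f k := by
  rw [sum_powerset_apply_card fun k => ((#s - k)! * k ! : R) * f k, mul_sum]
  refine sum_congr rfl fun k hk => ?_
  rw [← Nat.choose_mul_factorial_mul_factorial (mem_range_succ_iff.1 hk)]
  push_cast
  rw [nsmul_eq_mul]
  ring

section CountingByCycleLengths

variable {α : Type*} [Fintype α] [DecidableEq α]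

/-- The permutations of `α` all of whose cycle lengths satisfy `P`; a fixed point is a cycle of
length `1`. -/
noncomputable def permsWithCycleLengths (P : ℕ → Prop) (α : Type*) [Fintype α] [DecidableEq α] :
    Finset (Perm α) :=
  {σ | ∀ x, P (minimalPeriod σ x)}

/-- The permutations of `α` for which `s` is a single cycle and all the other cycle lengths
satisfy `P`. -/
noncomputable def permsCyclicOn (P : ℕ → Prop) (s : Finset α) : Finset (Perm α) :=
  {σ | σ.IsCycleOn s ∧ ∀ x ∉ s, P (minimalPeriod σ x)}

lemma mem_permsWithCycleLengths {P : ℕ → Prop} {σ : Perm α} :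
    σ ∈ permsWithCycleLengths P α ↔ ∀ x, P (minimalPeriod σ x) := mem_filter_univ σ

lemma mem_permsCyclicOn {P : ℕ → Prop} {s : Finset α} {σ : Perm α} :
    σ ∈ permsCyclicOn P s ↔ σ.IsCycleOn s ∧ ∀ x ∉ s, P (minimalPeriod σ x) := mem_filter_univ σ

lemma permsCyclicOn_subset_permsWithCycleLengths {P : ℕ → Prop} {s : Finset α} (hs : P #s) :
    permsCyclicOn P s ⊆ permsWithCycleLengths P α := by
  intro σ hσ
  rw [mem_permsCyclicOn] at hσ
  refine mem_permsWithCycleLengths.2 fun x => ?_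
  by_cases hx : x ∈ s
  · rwa [minimalPeriod_eq_card_of_isCycleOn hσ.1 hx]
  · exact hσ.2 x hx

lemma disjoint_permsCyclicOn (P : ℕ → Prop) {s t : Finset α} (hst : s ≠ t) {a : α} (has : a ∈ s)
    (hat : a ∈ t) : Disjoint (permsCyclicOn P s) (permsCyclicOn P t) := by
  refine disjoint_left.2 fun σ hσs hσt => hst ?_
  exact coe_injective (eq_of_isCycleOn_of_mem (mem_permsCyclicOn.1 hσs).1
    (mem_permsCyclicOn.1 hσt).1 has hat)

lemma factorial_mul_card_le_card_permsCyclicOn (P : ℕ → Prop) {s : Finset α} (hs : s.Nonempty) :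
    (#s - 1)! * #(permsWithCycleLengths P {x // x ∉ s}) ≤ #(permsCyclicOn P s) := by
  have := hs.to_subtype
  rw [← Fintype.card_coe s, ← card_isCycleOn_univ s, ← card_product]
  refine card_le_card_of_injOn (Perm.subtypeCongrHom (· ∈ s)) ?_
    (Perm.subtypeCongrHom_injective _).injOn
  rintro ⟨e, f⟩ hef
  simp only [coe_product, Set.mem_prod, mem_coe, mem_filter_univ,
    mem_permsWithCycleLengths] at hef
  set σ := Perm.subtypeCongrHom (· ∈ s) (e, f) with hσ
  have he : Semiconj (Subtype.val : {x // x ∈ s} → α) e σ := fun x => by simp [hσ]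
  have hf : Semiconj (Subtype.val : {x // x ∉ s} → α) f σ := fun x => by simp [hσ]
  refine mem_permsCyclicOn.2
    ⟨by simpa using isCycleOn_range_of_semiconj he hef.1, fun x hx => ?_⟩
  exact minimalPeriod_eq_of_semiconj Subtype.val_injective hf ⟨x, hx⟩ ▸ hef.2 ⟨x, hx⟩

lemma sum_card_permsCyclicOn_compl_le (P : ℕ → Prop) [DecidablePred P] (a : α) :
    ∑ u ∈ ({a}ᶜ : Finset α).powerset with P #uᶜ, #(permsCyclicOn P uᶜ) ≤
      #(permsWithCycleLengths P α) := by
  rw [← card_biUnion]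
  · refine card_le_card (biUnion_subset.2 fun u hu => ?_)
    exact permsCyclicOn_subset_permsWithCycleLengths (mem_filter.1 hu).2
  · have ha : ∀ u ∈ ({a}ᶜ : Finset α).powerset, a ∈ uᶜ := fun u hu => by
      simpa [subset_compl_singleton] using hu
    intro u hu v hv huv
    exact disjoint_permsCyclicOn P (compl_injective.ne huv) (ha u (mem_filter.1 hu).1)
      (ha v (mem_filter.1 hv).1)

theorem factorial_mul_le_card_permsWithCycleLengths {P : ℕ → Prop} [DecidablePred P] {p : ℕ → ℝ}
    (hp₀ : p 0 ≤ 1) (hp : ∀ m, m * p m ≤ ∑ j ∈ range m, if P (m - j) then p j else 0)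
    (α : Type*) [Fintype α] [DecidableEq α] :
    (Fintype.card α)! * p (Fintype.card α) ≤ #(permsWithCycleLengths P α) := by
  induction hm : Fintype.card α using Nat.strong_induction_on generalizing α with
  | _ m ih =>
  rcases m with _ | m
  · have := Fintype.card_eq_zero_iff.1 hm
    simpa [permsWithCycleLengths] using hp₀
  obtain ⟨a⟩ : Nonempty α := Fintype.card_pos_iff.1 (by omega)
  have hcard : #({a}ᶜ : Finset α) = m := by rw [card_compl, card_singleton, hm, Nat.add_sub_cancel]
  have hterm : ∀ u ∈ ({a}ᶜ : Finset α).powerset, P #uᶜ →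
      ((m - #u)! * (#u)! : ℝ) * p #u ≤ #(permsCyclicOn P uᶜ) := by
    intro u hu _
    have hum : #u ≤ m := hcard ▸ card_le_card (mem_powerset.1 hu)
    have huc : #uᶜ = m + 1 - #u := by rw [card_compl, hm]
    have hrest : Fintype.card {x // x ∉ uᶜ} = #u := by simp
    calc ((m - #u)! * (#u)! : ℝ) * p #u
        = (#uᶜ - 1)! * ((#u)! * p #u) := by rw [huc, mul_assoc, Nat.sub_right_comm]; rfl
      _ ≤ (#uᶜ - 1)! * #(permsWithCycleLengths P {x // x ∉ uᶜ}) := by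
          gcongr
          exact ih _ (by omega) _ hrest
      _ ≤ #(permsCyclicOn P uᶜ) := by
          have hne : uᶜ.Nonempty := card_pos.1 (by omega)
          exact_mod_cast factorial_mul_card_le_card_permsCyclicOn P hne
  calc ((m + 1)! : ℝ) * p (m + 1)
      = m ! * ((m + 1 : ℕ) * p (m + 1)) := by rw [Nat.factorial_succ]; push_cast; ring
    _ ≤ m ! * ∑ j ∈ range (m + 1), if P (m + 1 - j) then p j else 0 := by gcongr; exact hp _
    _ = ∑ u ∈ ({a}ᶜ : Finset α).powerset with P #uᶜ, ((m - #u)! * (#u)! : ℝ) * p #u := by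
        rw [← hcard, ← sum_powerset_factorial_mul_factorial, sum_filter]
        simp only [hcard, card_compl, hm, mul_ite, mul_zero]
    _ ≤ ∑ u ∈ ({a}ᶜ : Finset α).powerset with P #uᶜ, (#(permsCyclicOn P uᶜ) : ℝ) :=
        sum_le_sum fun u hu => hterm u (mem_filter.1 hu).1 (mem_filter.1 hu).2
    _ ≤ #(permsWithCycleLengths P α) := mod_cast sum_card_permsCyclicOn_compl_le P a

end CountingByCycleLengths

section OneSubDivProd

/-- The product `∏_{i=1}^q (1 - x/i)`. For `x = 1/b` and `q = ⌊m/b⌋` it is the proportion of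
permutations in `Sym_m` without cycles of length divisible by `b`. -/
noncomputable def oneSubDivProd (x : ℝ) (q : ℕ) : ℝ := ∏ i ∈ range q, (1 - x / (i + 1))

variable {x : ℝ}

lemma oneSubDivProd_zero (x : ℝ) : oneSubDivProd x 0 = 1 := prod_range_zero _

lemma oneSubDivProd_succ (x : ℝ) (q : ℕ) :
    oneSubDivProd x (q + 1) = oneSubDivProd x q * (1 - x / (q + 1)) := prod_range_succ _ _

lemma one_sub_mul_sum_oneSubDivProd (x : ℝ) (q : ℕ) :
    (1 - x) * ∑ j ∈ range q, oneSubDivProd x j = q * oneSubDivProd x q := by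
  induction q with
  | zero => simp
  | succ q ih =>
    rw [sum_range_succ, mul_add, ih, oneSubDivProd_succ]
    push_cast
    field_simp
    ring

lemma one_sub_div_nonneg (hx : x ≤ 1) (i : ℕ) : 0 ≤ 1 - x / (i + 1) := by
  have : x / (i + 1) ≤ 1 := by
    rw [div_le_one (by positivity)]
    linarith [(Nat.cast_nonneg i : (0 : ℝ) ≤ i)]
  linarith

lemma oneSubDivProd_nonneg (hx : x ≤ 1) (q : ℕ) : 0 ≤ oneSubDivProd x q :=
  prod_nonneg fun i _ => one_sub_div_nonneg hx i

lemma antitone_oneSubDivProd (hx₀ : 0 ≤ x) (hx₁ : x ≤ 1) : Antitone (oneSubDivProd x) := by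
  refine antitone_nat_of_succ_le fun q => ?_
  rw [oneSubDivProd_succ]
  exact mul_le_of_le_one_right (oneSubDivProd_nonneg hx₁ q) (sub_le_self _ (by positivity))

lemma one_sub_mul_rpow_neg_le_oneSubDivProd (hx₀ : 0 ≤ x) (hx₁ : x ≤ 1) {q : ℕ} (hq : 1 ≤ q) :
    (1 - x) * (q : ℝ) ^ (-x) ≤ oneSubDivProd x q := by
  induction q, hq using Nat.le_induction with
  | base => simp [oneSubDivProd]
  | succ q hq ih =>
    have hq₀ : (0 : ℝ) < q := by exact_mod_cast hq
    have hbase : 1 + -(1 / ((q : ℝ) + 1)) = q / (q + 1) := by field_simp; ring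
    have hbernoulli : ((q : ℝ) / (q + 1)) ^ x ≤ 1 - x / (q + 1) := by
      have h := rpow_one_add_le_one_add_mul_self (s := -(1 / ((q : ℝ) + 1)))
        (by linarith [div_nonneg hq₀.le (by positivity : (0 : ℝ) ≤ q + 1)]) hx₀ hx₁
      rw [hbase] at h
      exact h.trans_eq (by ring)
    calc (1 - x) * ((q + 1 : ℕ) : ℝ) ^ (-x)
        = (1 - x) * (q : ℝ) ^ (-x) * ((q : ℝ) / (q + 1)) ^ x := by
          rw [Real.div_rpow hq₀.le (by positivity), Real.rpow_neg hq₀.le,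
            Real.rpow_neg (by positivity)]
          push_cast
          field_simp
      _ ≤ oneSubDivProd x q * (1 - x / (q + 1)) := by
          gcongr
          exact oneSubDivProd_nonneg hx₁ q
      _ = oneSubDivProd x (q + 1) := (oneSubDivProd_succ x q).symm

end OneSubDivProd

lemma sum_range_if_mod_eq_zero_else {b r : ℕ} (hr : r < b) (f : ℕ → ℝ) (q : ℕ) :
    ∑ j ∈ range (q * b + r), (if j % b = r then 0 else f (j / b)) =
      (b - 1) * ∑ j ∈ range q, f j + r * f q := by
  have hmod (q k : ℕ) (hk : k < b) : (q * b + k) % b = k := by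
    rw [Nat.mul_add_mod', Nat.mod_eq_of_lt hk]
  have hdiv (q k : ℕ) (hk : k < b) : (q * b + k) / b = q := by
    rw [mul_comm, Nat.mul_add_div (by omega), Nat.div_eq_of_lt hk, add_zero]
  have hblocks : ∑ j ∈ range (q * b), (if j % b = r then 0 else f (j / b)) =
      (b - 1) * ∑ j ∈ range q, f j := by
    induction q with
    | zero => simp
    | succ q ih =>
      have hblock : ∑ k ∈ range b, (if (q * b + k) % b = r then 0 else f ((q * b + k) / b)) =
          (b - 1) * f q := by
        calc _ = ∑ k ∈ range b, (f q - if k = r then f q else 0) := by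
              refine sum_congr rfl fun k hk => ?_
              rw [hmod q k (mem_range.1 hk), hdiv q k (mem_range.1 hk)]
              split_ifs <;> simp
          _ = (b - 1) * f q := by
              rw [sum_sub_distrib, sum_const, card_range, sum_ite_eq', if_pos (mem_range.2 hr),
                nsmul_eq_mul]
              ring
      rw [Nat.succ_mul, sum_range_add, ih, hblock, sum_range_succ, mul_add]
  have htail : ∑ k ∈ range r, (if (q * b + k) % b = r then 0 else f ((q * b + k) / b)) =
      r * f q := by
    rw [← nsmul_eq_mul, ← card_range r, ← sum_const, card_range]
    refine sum_congr rfl fun k hk => ?_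
    have hkr := mem_range.1 hk
    rw [hmod q k (hkr.trans hr), hdiv q k (hkr.trans hr), if_neg hkr.ne]
  rw [sum_range_add, hblocks, htail]

lemma sum_range_not_dvd_oneSubDivProd {b : ℕ} (hb : 0 < b) (m : ℕ) :
    ∑ j ∈ range m, (if ¬ b ∣ m - j then oneSubDivProd (1 / b) (j / b) else 0) =
      m * oneSubDivProd (1 / b) (m / b) := by
  have hcond : ∀ j ∈ range m, (b ∣ m - j ↔ j % b = m % b) := fun j hj =>
    (Nat.modEq_iff_dvd' (mem_range.1 hj).le).symm
  have hm : m / b * b + m % b = m := Nat.div_add_mod' m b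
  have hm' : ((m / b : ℕ) : ℝ) * b + (m % b : ℕ) = m := mod_cast hm
  calc _ = ∑ j ∈ range (m / b * b + m % b),
        (if j % b = m % b then 0 else oneSubDivProd (1 / b) (j / b)) := by
        rw [hm]
        refine sum_congr rfl fun j hj => ?_
        rw [ite_not, if_congr (hcond j hj) rfl rfl]
    _ = b * ((1 - 1 / b) * ∑ j ∈ range (m / b), oneSubDivProd (1 / b) j) +
        (m % b : ℕ) * oneSubDivProd (1 / b) (m / b) := by
        rw [sum_range_if_mod_eq_zero_else (Nat.mod_lt m hb)]
        field_simp
    _ = m * oneSubDivProd (1 / b) (m / b) := by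
        rw [one_sub_mul_sum_oneSubDivProd, ← mul_assoc, mul_comm (b : ℝ), ← add_mul, hm']

theorem factorial_mul_oneSubDivProd_le_card {b : ℕ} (hb : 0 < b) (α : Type*) [Fintype α]
    [DecidableEq α] :
    (Fintype.card α)! * oneSubDivProd (1 / b) (Fintype.card α / b) ≤
      #(permsWithCycleLengths (¬ b ∣ ·) α) :=
  factorial_mul_le_card_permsWithCycleLengths (p := fun m => oneSubDivProd (1 / b) (m / b))
    (by rw [Nat.zero_div, oneSubDivProd_zero])
    (fun m => (sum_range_not_dvd_oneSubDivProd hb m).ge) α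

section SingleCycle

variable {b n : ℕ}

lemma filter_dvd_minimalPeriod_eq {α : Type*} [Fintype α] [DecidableEq α] {s : Finset α}
    (hs : b ∣ #s) {σ : Perm α} (hσ : σ ∈ permsCyclicOn (¬ b ∣ ·) s) :
    ({x | b ∣ minimalPeriod σ x} : Finset α) = s := by
  rw [mem_permsCyclicOn] at hσ
  ext x
  rw [mem_filter_univ]
  refine ⟨fun hx => by_contra fun hxs => hσ.2 x hxs hx, fun hx => ?_⟩
  rwa [minimalPeriod_eq_card_of_isCycleOn hσ.1 hx]

lemma ubProp_of_mem_permsCyclicOn (hb : 0 < b) (hbn : (b : ℝ) ≤ 4 * √n / 3) {s : Finset (Fin n)}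
    (hs : #s = b) {σ : Perm (Fin n)} (hσ : σ ∈ permsCyclicOn (¬ b ∣ ·) s) : ubProp b n σ := by
  have hdvd := filter_dvd_minimalPeriod_eq hs.symm.dvd hσ
  have hperiod : ∀ x, b ∣ minimalPeriod σ x → ¬ 2 * b ∣ minimalPeriod σ x := by
    intro x hx h2
    have hxs : x ∈ s := hdvd ▸ mem_filter_univ x |>.2 hx
    rw [minimalPeriod_eq_card_of_isCycleOn (mem_permsCyclicOn.1 hσ).1 hxs, hs] at h2
    exact absurd (Nat.le_of_dvd hb h2) (by omega)
  have hiff : ∀ x, (b ∣ minimalPeriod σ x ∧ ¬ 2 * b ∣ minimalPeriod σ x) ↔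
      b ∣ minimalPeriod σ x := fun x => and_iff_left_of_imp (hperiod x)
  refine ⟨1, le_rfl, ?_, ?_, fun x => (hiff x).not.1⟩
  · have : (0 : ℝ) < b := mod_cast hb
    rw [Nat.cast_one, le_div_iff₀ (by positivity)]
    linarith
  · simp only [hiff, hdvd, hs, one_mul]

lemma sum_card_permsCyclicOn_le (hb : 0 < b) (hbn : (b : ℝ) ≤ 4 * √n / 3) :
    ∑ s ∈ powersetCard b (univ : Finset (Fin n)), #(permsCyclicOn (¬ b ∣ ·) s) ≤
      #{σ : Perm (Fin n) | ubProp b n σ} := by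
  have hcard : ∀ s ∈ powersetCard b (univ : Finset (Fin n)), #s = b := fun s hs =>
    (mem_powersetCard.1 hs).2
  rw [← card_biUnion]
  · refine card_le_card (biUnion_subset.2 fun s hs σ hσ => ?_)
    exact mem_filter_univ σ |>.2 (ubProp_of_mem_permsCyclicOn hb hbn (hcard s hs) hσ)
  · refine fun s hs t ht hst => disjoint_left.2 fun σ hσs hσt => hst ?_
    rw [← filter_dvd_minimalPeriod_eq (hcard s hs).symm.dvd hσs,
      filter_dvd_minimalPeriod_eq (hcard t ht).symm.dvd hσt]

lemma factorial_mul_oneSubDivProd_le_card_permsCyclicOn {α : Type*} [Fintype α] [DecidableEq α]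
    (hb : 0 < b) {s : Finset α} (hs : s.Nonempty) :
    ((#s - 1)! : ℝ) * ((#sᶜ)! * oneSubDivProd (1 / b) (#sᶜ / b)) ≤
      #(permsCyclicOn (¬ b ∣ ·) s) := by
  have hrest : Fintype.card {x // x ∉ s} = #sᶜ := by
    rw [Fintype.card_subtype_compl, Fintype.card_coe, card_compl]
  calc ((#s - 1)! : ℝ) * ((#sᶜ)! * oneSubDivProd (1 / b) (#sᶜ / b))
      ≤ (#s - 1)! * #(permsWithCycleLengths (¬ b ∣ ·) {x // x ∉ s}) := by
        gcongr
        exact hrest ▸ factorial_mul_oneSubDivProd_le_card hb {x // x ∉ s}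
    _ ≤ #(permsCyclicOn (¬ b ∣ ·) s) :=
        mod_cast factorial_mul_card_le_card_permsCyclicOn (¬ b ∣ ·) hs

lemma le_of_le_four_mul_sqrt_div_three (hbn : (b : ℝ) ≤ 4 * √n / 3) : b ≤ n := by
  by_contra! hlt
  have : (n : ℝ) + 1 ≤ b := mod_cast hlt
  nlinarith [Real.sq_sqrt (Nat.cast_nonneg n : (0 : ℝ) ≤ n)]

theorem oneSubDivProd_div_le_ub (hb : 0 < b) (hbn : (b : ℝ) ≤ 4 * √n / 3) :
    oneSubDivProd (1 / b) ((n - b) / b) / b ≤ ub b n := by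
  set p := oneSubDivProd (1 / b) ((n - b) / b)
  have hterm : ∀ s ∈ powersetCard b (univ : Finset (Fin n)),
      ((b - 1)! : ℝ) * ((n - b)! * p) ≤ #(permsCyclicOn (¬ b ∣ ·) s) := by
    intro s hs
    have hsb : #s = b := (mem_powersetCard.1 hs).2
    have h := factorial_mul_oneSubDivProd_le_card_permsCyclicOn hb (card_pos.1 (hsb ▸ hb))
    rwa [card_compl, Fintype.card_fin, hsb] at h
  have hfac : (n ! : ℝ) = b * ((n.choose b : ℝ) * (b - 1)! * (n - b)!) := by
    rw [← Nat.choose_mul_factorial_mul_factorial (le_of_le_four_mul_sqrt_div_three hbn),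
      ← Nat.mul_factorial_pred hb.ne']
    push_cast
    ring
  rw [ub, le_div_iff₀ (by positivity), hfac]
  calc p / b * (b * ((n.choose b : ℝ) * (b - 1)! * (n - b)!))
      = (n.choose b : ℝ) * ((b - 1)! * ((n - b)! * p)) := by field_simp
    _ = ∑ _s ∈ powersetCard b (univ : Finset (Fin n)), (b - 1)! * ((n - b)! * p) := by
        rw [sum_const, card_powersetCard, card_univ, Fintype.card_fin, nsmul_eq_mul]
    _ ≤ ∑ s ∈ powersetCard b (univ : Finset (Fin n)), (#(permsCyclicOn (¬ b ∣ ·) s) : ℝ) :=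
        sum_le_sum hterm
    _ ≤ #{σ : Perm (Fin n) | ubProp b n σ} := mod_cast sum_card_permsCyclicOn_le hb hbn

end SingleCycle

lemma exp_neg_log_div_le_ub {b n : ℕ} (hb : 2 ≤ b) (hbn : (b : ℝ) ≤ 4 * √n / 3) :
    Real.exp (-(Real.log n / b)) / (2 * b) ≤ ub b n := by
  have hb₂ : (2 : ℝ) ≤ b := mod_cast hb
  have hn : 1 ≤ n := Nat.one_le_iff_ne_zero.2 fun hn => by
    rw [hn, Nat.cast_zero, Real.sqrt_zero] at hbn
    linarith
  have hx₀ : 0 ≤ 1 / (b : ℝ) := by positivity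
  have hx₂ : 1 / (b : ℝ) ≤ 1 / 2 := one_div_le_one_div_of_le two_pos hb₂
  have hexp : Real.exp (-(Real.log n / b)) = (n : ℝ) ^ (-(1 / b : ℝ)) := by
    rw [Real.rpow_def_of_pos (mod_cast hn)]
    congr 1
    ring
  calc Real.exp (-(Real.log n / b)) / (2 * b)
      = (1 - 1 / 2) * (n : ℝ) ^ (-(1 / b : ℝ)) / b := by rw [hexp]; ring
    _ ≤ (1 - 1 / b) * (n : ℝ) ^ (-(1 / b : ℝ)) / b := by gcongr
    _ ≤ oneSubDivProd (1 / b) n / b := by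
        gcongr
        exact one_sub_mul_rpow_neg_le_oneSubDivProd hx₀ (by linarith) hn
    _ ≤ oneSubDivProd (1 / b) ((n - b) / b) / b := by
        gcongr
        exact antitone_oneSubDivProd hx₀ (by linarith)
          ((Nat.div_le_self _ _).trans (Nat.sub_le _ _))
    _ ≤ ub b n := oneSubDivProd_div_le_ub (by omega) hbn

lemma exp_le_eight_mul {t : ℝ} (ht₀ : 3 / 4 ≤ t) (ht₃ : t ≤ 3) : Real.exp t ≤ 8 * t := by
  have he : Real.exp 1 < 2.72 := Real.exp_one_lt_d9.trans (by norm_num)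
  have hleft : Real.exp (3 / 4) ≤ 8 * (3 / 4) :=
    (Real.exp_le_exp.2 (by norm_num : (3 / 4 : ℝ) ≤ 1)).trans (by linarith)
  have hright : Real.exp 3 ≤ 8 * 3 := by
    rw [← mul_one (3 : ℝ), ← Nat.cast_ofNat, Real.exp_nat_mul]
    calc Real.exp 1 ^ 3 ≤ 2.72 ^ 3 := by gcongr
      _ ≤ _ := by norm_num
  have hconvex : ConvexOn ℝ Set.univ fun t => Real.exp t - 8 * t :=
    convexOn_exp.sub ((concaveOn_id convex_univ).smul (by norm_num : (0 : ℝ) ≤ 8))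
  have hmax := hconvex.le_max_of_mem_Icc (Set.mem_univ _) (Set.mem_univ _) ⟨ht₀, ht₃⟩
  have hmax₀ : max (Real.exp (3 / 4) - 8 * (3 / 4)) (Real.exp 3 - 8 * 3) ≤ 0 :=
    max_le (by linarith) (by linarith)
  linarith

lemma log_le_sqrt {x : ℝ} (hx : 0 ≤ x) : Real.log x ≤ √x := by
  rcases hx.eq_or_lt with rfl | hx
  · simp
  have hsqrt : 0 < √x := Real.sqrt_pos.2 hx
  have hlog : Real.log (√x / 2) = Real.log x / 2 - Real.log 2 := by
    rw [Real.log_div hsqrt.ne' two_ne_zero, Real.log_sqrt hx.le]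
  linarith [Real.log_le_sub_one_of_pos (half_pos hsqrt), Real.log_two_lt_d9]

lemma one_div_sixteen_mul_log_le_ub {b n : ℕ} (hb : 2 ≤ b) (hlow : Real.log n ≤ 3 * b)
    (hup : 3 * b ≤ 4 * Real.log n) : 1 / (16 * Real.log n) ≤ ub b n := by
  have hb₀ : (0 : ℝ) < b := by positivity
  have hbn : (b : ℝ) ≤ 4 * √n / 3 := by linarith [log_le_sqrt (Nat.cast_nonneg n)]
  have hexp : Real.exp (Real.log n / b) ≤ 8 * (Real.log n / b) :=
    exp_le_eight_mul (by rw [le_div_iff₀ hb₀]; linarith) (by rwa [div_le_iff₀ hb₀])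
  calc 1 / (16 * Real.log n)
      = 1 / (8 * (Real.log n / b) * (2 * b)) := by field_simp; norm_num
    _ ≤ 1 / (Real.exp (Real.log n / b) * (2 * b)) := by gcongr
    _ = Real.exp (-(Real.log n / b)) / (2 * b) := by rw [Real.exp_neg]; field_simp
    _ ≤ ub b n := exp_neg_log_div_le_ub hb hbn

lemma three_lt_log {x : ℝ} (hx : 404 ≤ x) : 3 < Real.log x := by
  rw [Real.lt_log_iff_exp_lt (by linarith)]
  linarith [exp_le_eight_mul (t := 3) (by norm_num) le_rfl]

lemma pow_toNat_ceil_logb_mem_Icc {β x : ℝ} (hβ : 1 < β) (hx : 1 ≤ x) :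
    β ^ ⌈Real.logb β x⌉.toNat ∈ Set.Icc x (β * x) := by
  have hβ₀ : 0 < β := one_pos.trans hβ
  have hx₀ : 0 < x := one_pos.trans_le hx
  rw [Int.ceil_toNat, ← Real.rpow_natCast]
  constructor
  · rw [← Real.logb_le_iff_le_rpow hβ hx₀]
    exact Nat.le_ceil _
  · rw [← Real.le_logb_iff_rpow_le hβ (by positivity), Real.logb_mul hβ₀.ne' hx₀.ne',
      Real.logb_self_eq_one hβ, add_comm]
    exact (Nat.ceil_lt_add_one (Real.logb_nonneg hβ hx)).le

theorem ub_lower_bounds_general {b n : ℕ} (hb : 2 ≤ b) (hlow : Real.log n ≤ 3 * b)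
    (hup : 3 * b ≤ 2 * Real.log n) :
    1 / (16 * Real.log n) ≤ ub b n ∧ 1 / (16 * Real.log n) ≤ ub (2 * b) n :=
  ⟨one_div_sixteen_mul_log_le_ub hb hlow (by linarith),
    one_div_sixteen_mul_log_le_ub (by omega) (by push_cast; linarith) (by push_cast; linarith)⟩

/-- For `n ≥ 404` and `b = 2^{⌈log₂((1/3)·log n)⌉}`, one has
`u_b(n) ≥ 1/(16 log n)` and `u_{2b}(n) ≥ 1/(21 log n)`. -/
theorem ub_lower_bounds (n : ℕ) (hn : 404 ≤ n) (b : ℕ)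
    (hb : b = 2 ^ (⌈Real.logb 2 (Real.log n / 3)⌉).toNat) :
    1 / (16 * Real.log n) ≤ ub b n ∧ 1 / (21 * Real.log n) ≤ ub (2 * b) n := by
  have hlog : 3 < Real.log n := three_lt_log (mod_cast hn)
  obtain ⟨hlow, hup⟩ : (b : ℝ) ∈ Set.Icc (Real.log n / 3) (2 * (Real.log n / 3)) := by
    rw [hb]
    exact_mod_cast pow_toNat_ceil_logb_mem_Icc one_lt_two (by linarith)
  have hb₁ : (1 : ℝ) < b := by linarith
  obtain ⟨h₁, h₂⟩ := ub_lower_bounds_general (mod_cast hb₁) (by linarith) (by linarith)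
  refine ⟨h₁, le_trans ?_ h₂⟩
  gcongr
  norm_num
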